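/- arXiv:math/0610540 — 2 statements merged into one kernel-verified Lean document; each statement's English description precedes it below -/
import Mathlib

section
/- Let μ = (μ₁,…,μ_n) be a tuple of non-negative integers and set H̃_μ(z) = z · ∏_{i=1}^n (z−μ_i−1) / ∏_{i=1}^n (z−μ_i). For positive integers k₁,…,k_l with K = k₁+⋯+k_l ≤ n, one has (−1)^l · (n)_K · k₁⋯k_l · χ̃^μ_{(k₁,…,k_l,1^{n−K})} = χ̃^μ_{(1^n)} · [z₁^{−1}]⋯[z_l^{−1}] [ ( ∏_{1≤r≤l} H̃_μ(z_r)·H̃_μ(z_r−1)⋯H̃_μ(z_r−k_r+1) ) · ∏_{1≤s<t≤l} ( (z_s−z_t)(z_s−z_t+k_t−k_s) ) / ( (z_s−z_t−k_s)(z_s−z_t+k_t) ) ], where the coefficient extraction is performed by expanding the rational expression as a formal Laurent series in decreasing powers of z_l (with coefficients rational functions of z₁,…,z_{l−1}), taking the coefficient of z_l^{−1}, and repeating successively with respect to z_{l−1}, …, z₁. -/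
open scoped BigOperators

/-- For a tuple `μ = (μ₁,…,μₙ)` of non-negative integers and a multiset `k` of positive
integers, `χ̃^μ_k` is the coefficient of `x^μ = x₁^{μ₁}⋯xₙ^{μₙ}` in
`(∑ᵢ xᵢ^{k₁}) ⋯ (∑ᵢ xᵢ^{k_r}) ⋅ ∑_{w ∈ Sₙ} sgn(w) x^{wδ}`, where `δ = (n-1,…,1,0)`. -/
noncomputable def chiTilde (n : ℕ) (μ : Fin n → ℕ) (k : Multiset ℕ) : ℤ :=
  MvPolynomial.coeff
    (Finsupp.equivFunOnFinite.symm μ)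
    ((Multiset.map (fun m => ∑ i : Fin n, MvPolynomial.X i ^ m) k).prod *
      ∑ w : Equiv.Perm (Fin n),
        MvPolynomial.C ((Equiv.Perm.sign w : ℤ)) *
          ∏ i : Fin n, MvPolynomial.X i ^ (n - 1 - ((w i : ℕ))))

/-- The function `H̃_μ(w) = w ⋅ ∏_{i=1}^n (w-μᵢ-1) / ∏_{i=1}^n (w-μᵢ)`, evaluated in any
field. -/
noncomputable def HtildeOf (n : ℕ) (μ : Fin n → ℕ) {F : Type} [Field F] (w : F) : F :=
  w * (∏ i : Fin n, (w - (μ i : F) - 1)) / ∏ i : Fin n, (w - (μ i : F))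

/-- Iterated Laurent series fields: level 0 is `ℚ`, level `l+1` is the field of formal
Laurent series over level `l`. -/
noncomputable def ItL : ℕ → (T : Type) × Field T
  | 0 => ⟨ℚ, inferInstance⟩
  | l + 1 =>
    haveI := (ItL l).2
    ⟨LaurentSeries (ItL l).1, inferInstance⟩

/-- The underlying type of the `l`-th iterated Laurent series field. -/
abbrev ItLT (l : ℕ) : Type := (ItL l).1

noncomputable instance (l : ℕ) : Field (ItLT l) := (ItL l).2

/-- The variable `z_{r+1}` (for `0 ≤ r < l`), as an element of the `l`-th iterated
Laurent series field: it is the inverse of the formal variable of the `(r+1)`-st level,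
so that expansions in increasing powers of the level-`(r+1)` formal variable are exactly
expansions in decreasing powers of `z_{r+1}`, with coefficients that are (expansions of)
functions of `z_1, …, z_r`. -/
noncomputable def zVar : (l : ℕ) → ℕ → ItLT l
  | 0, _ => 0
  | l + 1, r =>
    if r = l then
      (show LaurentSeries (ItLT l) from (HahnSeries.single (1 : ℤ) (1 : ItLT l))⁻¹)
    else
      (show LaurentSeries (ItLT l) from HahnSeries.C (zVar l r))

/-- Iterated coefficient extraction `[z₁^{-1}] ⋯ [z_l^{-1}]`: successively take the
coefficient of `z^{-1}` in the expansion in decreasing powers of `z = z_l, z_{l-1}, …`,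
i.e. the coefficient of the first power of the formal variable at each level. -/
noncomputable def extractInv : (l : ℕ) → ItLT l → ℚ
  | 0, x => x
  | l + 1, f => extractInv l ((show LaurentSeries (ItLT l) from f).coeff 1)

/-!
Call `H_k(z) = H̃_μ(z) H̃_μ(z - 1)⋯H̃_μ(z - k + 1)`; after cancellation its only poles are the
`μᵢ`. The coefficient of `z₁⁻¹` is extracted last. Apart from `∏ᵢ (z₁ - μᵢ)`, every denominator of
the integrand is, up to sign, monic of degree one in some `z_t` with `t ≥ 2`, so that expanding in
`z_l, …, z₂` only produces coefficients which are polynomials in `z₁` divided by `∏ᵢ (z₁ - μᵢ)`.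
By partial fractions, the `z₁⁻¹`-coefficient is then the sum over `i` of the residues at `z₁ = μᵢ`,
and evaluating polynomials at `μᵢ` commutes with the other coefficient extractions. At `z₁ = μᵢ`
the factor of the pair `(1, t)` turns `H_{k_t}(z_t)` for `μ` into the same product for the tuple
`μ - k₁ eᵢ`, so the iterated residue of `(μ; k₁, …, k_l)` is a linear combination of those of
`(μ - k₁ eᵢ; k₂, …, k_l)`. This matches the recursion `χ̃^μ_{(k₁, …)} = ∑ᵢ χ̃^{μ - k₁ eᵢ}_{(…)}`:
the weights agree because `χ̃^μ_{(1^m)} ∏ᵢ μᵢ!` is, up to a factor depending only on `m` and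
`∑ᵢ μᵢ`, the Vandermonde determinant of `μ`. If `μ` has a repeated entry, `χ̃^μ` vanishes by
antisymmetry.
-/

section LaurentSeriesAtInfinity

variable {R S : Type*} [CommRing R] [CommRing S]

/-- The ring homomorphism between Laurent series rings that applies `f` to every coefficient. -/
noncomputable def laurentMap (f : R →+* S) : LaurentSeries R →+* LaurentSeries S where
  toFun x := x.map f
  map_one' := HahnSeries.map_one f.toMonoidWithZeroHom
  map_zero' := HahnSeries.map_zero (f : ZeroHom R S)
  map_add' _ _ := HahnSeries.map_add (f : R →+ S)
  map_mul' _ _ := HahnSeries.map_mul (f : R →ₙ+* S)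

theorem laurentMap_C (f : R →+* S) (a : R) :
    laurentMap f (HahnSeries.C a) = HahnSeries.C (f a) :=
  HahnSeries.map_C a f

theorem laurentMap_single_one (f : R →+* S) (m : ℤ) :
    laurentMap f (HahnSeries.single m 1) = HahnSeries.single m 1 :=
  (HahnSeries.map_single (f : ZeroHom R S)).trans (congrArg _ f.map_one)

/-- The variable `z` of the ring `R((1/z))`, which is encoded as Laurent series in `1/z`; thus
`HahnSeries.coeff f 1` is the coefficient of `z⁻¹` in `f`. -/
noncomputable def laurentZ (R : Type*) [CommRing R] : LaurentSeries R := HahnSeries.single (-1) 1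

theorem exists_laurentZ_sub_C_mul_eq_one (c : R) :
    ∃ y : LaurentSeries R, (laurentZ R - HahnSeries.C c) * y = 1 ∧ y.coeff 1 = 1 := by
  have hu : IsUnit (1 - PowerSeries.C c * PowerSeries.X : PowerSeries R) := by
    simp [PowerSeries.isUnit_iff_constantCoeff]
  obtain ⟨g, hg⟩ := hu.exists_right_inv
  have hg0 : PowerSeries.coeff 0 g = 1 := by
    simpa using congrArg PowerSeries.constantCoeff hg
  refine ⟨HahnSeries.single 1 1 * HahnSeries.ofPowerSeries ℤ R g, ?_, ?_⟩
  · have hg' := congrArg (HahnSeries.ofPowerSeries ℤ R) hg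
    simp only [map_mul, map_sub, map_one, HahnSeries.ofPowerSeries_C,
      HahnSeries.ofPowerSeries_X] at hg'
    rw [← hg', ← mul_assoc, laurentZ, sub_mul, HahnSeries.single_mul_single]
    simp
  · have hshift := HahnSeries.coeff_single_mul_add (r := (1 : R))
      (x := HahnSeries.ofPowerSeries ℤ R g) (a := 0) (b := 1)
    have hcoeff := HahnSeries.ofPowerSeries_apply_coeff (Γ := ℤ) g 0
    rw [zero_add, one_mul] at hshift
    rw [hshift, ← hg0, ← hcoeff, Nat.cast_zero]

theorem isUnit_laurentZ_sub_C (c : R) : IsUnit (laurentZ R - HahnSeries.C c) := by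
  obtain ⟨y, hy, -⟩ := exists_laurentZ_sub_C_mul_eq_one c
  exact IsUnit.of_mul_eq_one y hy

/-- The inclusion of `R[z]` into `R((1/z))`. -/
noncomputable def polynomialToLaurent (R : Type*) [CommRing R] :
    Polynomial R →+* LaurentSeries R :=
  Polynomial.eval₂RingHom HahnSeries.C (laurentZ R)

theorem polynomialToLaurent_X : polynomialToLaurent R Polynomial.X = laurentZ R :=
  Polynomial.eval₂_X _ _

theorem polynomialToLaurent_C (a : R) :
    polynomialToLaurent R (Polynomial.C a) = HahnSeries.C a :=
  Polynomial.eval₂_C _ _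

theorem coeff_one_polynomialToLaurent (p : Polynomial R) :
    (polynomialToLaurent R p).coeff 1 = 0 := by
  induction p using Polynomial.induction_on' with
  | add p q hp hq => rw [map_add, HahnSeries.coeff_add, hp, hq, add_zero]
  | monomial n a =>
    rw [polynomialToLaurent, Polynomial.coe_eval₂RingHom, Polynomial.eval₂_monomial, laurentZ,
      HahnSeries.single_pow, HahnSeries.C_apply, HahnSeries.coeff_single_zero_mul,
      HahnSeries.coeff_single_of_ne (by simp; omega), mul_zero]

end LaurentSeriesAtInfinity

section Residue

variable {F ι : Type*} [Field F] [Fintype ι] [DecidableEq ι]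

theorem coeff_one_polynomialToLaurent_mul_inv (p : Polynomial F) (c : F) :
    (polynomialToLaurent F p * (laurentZ F - HahnSeries.C c)⁻¹).coeff 1 = p.eval c := by
  obtain ⟨y, hy, hy1⟩ := exists_laurentZ_sub_C_mul_eq_one c
  have hdiv : polynomialToLaurent F p = HahnSeries.C (p.eval c) +
      (laurentZ F - HahnSeries.C c) * polynomialToLaurent F (p /ₘ (.X - .C c)) := by
    conv_lhs => rw [← Polynomial.modByMonic_add_div p (.X - .C c),
      Polynomial.modByMonic_X_sub_C_eq_C_eval]
    simp only [map_add, map_mul, map_sub, polynomialToLaurent_X, polynomialToLaurent_C]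
  rw [inv_eq_of_mul_eq_one_right hy, hdiv, add_mul, mul_right_comm, hy, one_mul,
    HahnSeries.coeff_add, coeff_one_polynomialToLaurent, add_zero, HahnSeries.C_apply,
    HahnSeries.coeff_single_zero_mul, hy1, mul_one]

theorem prod_inv_sub_eq_sum [Nonempty ι] {v : ι → F} (hv : Function.Injective v) {z : F}
    (hz : ∀ i, z - v i ≠ 0) :
    ∏ i, (z - v i)⁻¹ = ∑ i, (∏ j ∈ Finset.univ.erase i, (v i - v j)⁻¹) * (z - v i)⁻¹ := by
  have h := Lagrange.eval_interpolate_not_at_node (s := Finset.univ) (v := v) (x := z) 1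
    fun i _ => sub_ne_zero.1 (hz i)
  simp only [Lagrange.interpolate_one hv.injOn Finset.univ_nonempty, Polynomial.eval_one,
    Lagrange.eval_nodal, Pi.one_apply, mul_one, Lagrange.nodalWeight] at h
  rw [Finset.prod_inv_distrib]
  exact inv_eq_of_mul_eq_one_right h.symm

theorem coeff_one_polynomialToLaurent_mul_prod_inv {v : ι → F} (hv : Function.Injective v)
    (p : Polynomial F) :
    (polynomialToLaurent F p * ∏ i, (laurentZ F - HahnSeries.C (v i))⁻¹).coeff 1 =
      ∑ i, p.eval (v i) * ∏ j ∈ Finset.univ.erase i, (v i - v j)⁻¹ := by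
  cases isEmpty_or_nonempty ι
  · simp [coeff_one_polynomialToLaurent]
  rw [prod_inv_sub_eq_sum (v := fun i => HahnSeries.C (v i)) (HahnSeries.C_injective.comp hv)
    fun i => (isUnit_laurentZ_sub_C (v i)).ne_zero, Finset.mul_sum, HahnSeries.coeff_sum]
  refine Finset.sum_congr rfl fun i _ => ?_
  have hweight : ∏ j ∈ Finset.univ.erase i,
      (HahnSeries.C (v i) - HahnSeries.C (v j) : LaurentSeries F)⁻¹ =
        HahnSeries.C (∏ j ∈ Finset.univ.erase i, (v i - v j)⁻¹) := by
    simp only [map_prod, map_inv₀, map_sub]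
  rw [hweight, mul_left_comm, HahnSeries.C_apply, HahnSeries.coeff_single_zero_mul, mul_comm]
  exact congrArg (· * _) (coeff_one_polynomialToLaurent_mul_inv p (v i))

end Residue

section IteratedLaurent

/-- The tower of iterated Laurent series rings over a commutative ring `A`: the analogue of
`ItL`, with an arbitrary base ring in place of `ℚ`. -/
noncomputable def laurentTower (A : Type) [CommRing A] : ℕ → (T : Type) × CommRing T
  | 0 => ⟨A, inferInstance⟩
  | l + 1 =>
    haveI := (laurentTower A l).2
    ⟨LaurentSeries (laurentTower A l).1, inferInstance⟩

/-- The `l`-th iterated Laurent series ring `A((1/z₁))⋯((1/z_l))`. -/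
abbrev IterLaurent (A : Type) [CommRing A] (l : ℕ) : Type := (laurentTower A l).1

noncomputable instance (A : Type) [CommRing A] (l : ℕ) : CommRing (IterLaurent A l) :=
  (laurentTower A l).2

namespace IterLaurent

variable {A : Type} [CommRing A] {d : ℕ}

/-- The inclusion of the `l`-th level of the tower into the next one. -/
noncomputable def up (l : ℕ) : IterLaurent A l →+* IterLaurent A (l + 1) :=
  (HahnSeries.C : IterLaurent A l →+* LaurentSeries (IterLaurent A l))

/-- The inclusion of the base ring into the `l`-th level of the tower. -/
noncomputable def const : (l : ℕ) → A →+* IterLaurent A l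
  | 0 => RingHom.id A
  | l + 1 => (up l).comp (const l)

/-- The variable `z_{l+1}` of the outermost Laurent series of the `(l + 1)`-st level. -/
noncomputable def topVar (l : ℕ) : IterLaurent A (l + 1) := laurentZ (IterLaurent A l)

/-- The variable `z_{r+1}`, for `r < l`; the analogue of `zVar` over the base ring `A`. -/
noncomputable def var : (l : ℕ) → ℕ → IterLaurent A l
  | 0, _ => 0
  | l + 1, r => if r = l then topVar l else up l (var l r)

/-- The iterated coefficient of `z₁⁻¹⋯z_l⁻¹`; the analogue of `extractInv` over the base
ring `A`. -/
noncomputable def coeffInv : (l : ℕ) → IterLaurent A l → A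
  | 0, x => x
  | l + 1, x => coeffInv l ((show LaurentSeries (IterLaurent A l) from x).coeff 1)

theorem coeffInv_const_mul (l : ℕ) (a : A) (x : IterLaurent A l) :
    coeffInv l (const l a * x) = a * coeffInv l x := by
  induction l with
  | zero => rfl
  | succ l ih =>
    exact (congrArg (coeffInv l) HahnSeries.coeff_single_zero_mul).trans (ih _)

theorem isUnit_topVar_sub_up (l : ℕ) (x : IterLaurent A l) : IsUnit (topVar l - up l x) :=
  isUnit_laurentZ_sub_C x

theorem isUnit_var_sub_const {l r : ℕ} (hr : r < l) (a : A) : IsUnit (var l r - const l a) := by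
  induction l with
  | zero => omega
  | succ l ih =>
    rw [var, const, RingHom.comp_apply]
    split_ifs with h
    · exact isUnit_topVar_sub_up l _
    · rw [← map_sub]
      exact (ih (by omega)).map (up l)

theorem isUnit_var_sub_var_add_const {l r s : ℕ} (hrs : r < s) (hs : s < l) (a : A) :
    IsUnit (var l r - var l s + const l a) := by
  induction l with
  | zero => omega
  | succ l ih =>
    rw [var, var, if_neg (by omega : r ≠ l), const, RingHom.comp_apply]
    split_ifs with h
    · rw [sub_add_eq_add_sub, ← map_add, ← neg_sub]
      exact (isUnit_topVar_sub_up l _).neg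
    · rw [← map_sub, ← map_add]
      exact (ih (by omega)).map (up l)

/-- The coefficientwise extension of `f : A → ItLT d` to the tower over `A`; it sends the
variable `z_r` to `z_{d+r}`. -/
noncomputable def toItLT (f : A →+* ItLT d) : (l : ℕ) → IterLaurent A l →+* ItLT (d + l)
  | 0 => f
  | l + 1 => (laurentMap (toItLT f l) :
      LaurentSeries (IterLaurent A l) →+* LaurentSeries (ItLT (d + l)))

end IterLaurent

/-- The inclusion of the `d`-th iterated Laurent series field into the `(d + l)`-th one. -/
noncomputable def liftItLT (d : ℕ) : (l : ℕ) → ItLT d →+* ItLT (d + l)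
  | 0 => RingHom.id (ItLT d)
  | l + 1 => (HahnSeries.C : ItLT (d + l) →+* LaurentSeries (ItLT (d + l))).comp (liftItLT d l)

theorem laurentZ_eq_inv_single (F : Type*) [Field F] :
    laurentZ F = (HahnSeries.single 1 1)⁻¹ := by
  rw [laurentZ, HahnSeries.inv_single, inv_one]

theorem zVar_succ_self (l : ℕ) : zVar (l + 1) l = laurentZ (ItLT l) :=
  (if_pos rfl).trans (laurentZ_eq_inv_single (ItLT l)).symm

theorem zVar_succ_of_ne {l r : ℕ} (h : r ≠ l) : zVar (l + 1) r = liftItLT l 1 (zVar l r) :=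
  if_neg h

theorem liftItLT_zVar {d r : ℕ} (hr : r < d) (l : ℕ) :
    liftItLT d l (zVar d r) = zVar (d + l) r := by
  induction l with
  | zero => rfl
  | succ l ih =>
    exact (congrArg HahnSeries.C ih).trans (zVar_succ_of_ne (by omega)).symm

namespace IterLaurent

variable {A : Type} [CommRing A] {d : ℕ}

theorem toItLT_var (f : A →+* ItLT d) {l r : ℕ} (hr : r < l) :
    toItLT f l (var l r) = zVar (d + l) (d + r) := by
  induction l with
  | zero => omega
  | succ l ih =>
    rw [var]
    split_ifs with h
    · subst h
      exact (laurentMap_single_one (toItLT f r) (-1)).trans (zVar_succ_self (d + r)).symm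
    · exact (laurentMap_C (toItLT f l) (var l r)).trans <|
        (congrArg HahnSeries.C (ih (by omega))).trans (zVar_succ_of_ne (by omega)).symm

theorem toItLT_const (f : A →+* ItLT d) (l : ℕ) (a : A) :
    toItLT f l (const l a) = liftItLT d l (f a) := by
  induction l with
  | zero => rfl
  | succ l ih =>
    exact (laurentMap_C (toItLT f l) (const l a)).trans (congrArg HahnSeries.C ih)

theorem extractInv_toItLT_mul (f : A →+* ItLT d) (l : ℕ) (x : IterLaurent A l) (a : ItLT d) :
    extractInv (d + l) (toItLT f l x * liftItLT d l a) = extractInv d (f (coeffInv l x) * a) := by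
  induction l with
  | zero => rfl
  | succ l ih =>
    exact (congrArg (extractInv (d + l)) HahnSeries.coeff_mul_single_zero).trans (ih _)

/-- The inclusion of `ℚ[z₁]` into `ItLT 1 = ℚ((1/z₁))`. -/
noncomputable def polynomialToItLT : Polynomial ℚ →+* ItLT 1 := polynomialToLaurent ℚ

/-- The evaluation `z₁ ↦ q`, with values in `ItLT 0 = ℚ`. -/
noncomputable def evalToItLT (q : ℚ) : Polynomial ℚ →+* ItLT 0 := Polynomial.evalRingHom q

theorem polynomialToItLT_X : polynomialToItLT Polynomial.X = zVar 1 0 :=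
  polynomialToLaurent_X.trans (zVar_succ_self 0).symm

theorem extractInv_toItLT_eval (q : ℚ) (l : ℕ) (x : IterLaurent (Polynomial ℚ) l) :
    extractInv (0 + l) (toItLT (evalToItLT q) l x) = (coeffInv l x).eval q := by
  have h := extractInv_toItLT_mul (evalToItLT q) l x 1
  rwa [map_one, mul_one, mul_one] at h

theorem extractInv_const_mul_prod_inv {ι : Type*} [Fintype ι] [DecidableEq ι] {v : ι → ℕ}
    (hv : Function.Injective v) (l : ℕ) (p : Polynomial ℚ) (x : IterLaurent (Polynomial ℚ) l) :
    extractInv (1 + l) (toItLT polynomialToItLT l (const l p * x) *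
        ∏ i, (zVar (1 + l) 0 - (v i : ItLT (1 + l)))⁻¹) =
      ∑ i, p.eval (v i : ℚ) * (∏ j ∈ Finset.univ.erase i, ((v i : ℚ) - v j)⁻¹) *
        extractInv (0 + l) (toItLT (evalToItLT (v i)) l x) := by
  have hprod : ∏ i, (zVar (1 + l) 0 - (v i : ItLT (1 + l)))⁻¹ =
      liftItLT 1 l (∏ i, (zVar 1 0 - (v i : ItLT 1))⁻¹) := by
    simp only [map_prod, map_inv₀, map_sub, map_natCast, liftItLT_zVar Nat.one_pos]
  have hlaurent : ∏ i, (zVar 1 0 - (v i : ItLT 1))⁻¹ =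
      ∏ i, (laurentZ ℚ - HahnSeries.C (v i : ℚ))⁻¹ := by
    simp only [map_natCast]
    exact congrArg (fun z => ∏ i, (z - (v i : ItLT 1))⁻¹) (zVar_succ_self 0)
  rw [hprod, extractInv_toItLT_mul, coeffInv_const_mul, hlaurent]
  refine (coeff_one_polynomialToLaurent_mul_prod_inv (Nat.cast_injective.comp hv)
    (p * coeffInv l x)).trans (Finset.sum_congr rfl fun i _ => ?_)
  rw [extractInv_toItLT_eval, Polynomial.eval_mul, mul_right_comm]
  rfl

end IterLaurent

end IteratedLaurent

section Integrand

variable {A B : Type*} [CommRing A] [CommRing B] {n l : ℕ}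

/-- The factor `(a - b)(a - b + k_b - k_a) / ((a - b - k_a)(a - b + k_b))` attached to a pair of
variables. The quotient is taken with `Ring.inverse`, so as to make sense over any commutative
ring in which the denominator is a unit. -/
noncomputable def crossFactor (a b : A) (ka kb : ℕ) : A :=
  (a - b) * (a - b + kb - ka) * Ring.inverse ((a - b - ka) * (a - b + kb))

/-- The numerator `z(z - 1)⋯(z - k + 1) ∏ᵢ (z - μᵢ - k)` of `H̃_μ(z) H̃_μ(z - 1)⋯H̃_μ(z - k + 1)`
after cancellation; the denominator is `∏ᵢ (z - μᵢ)`. -/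
def hNumerator (μ : Fin n → ℕ) (k : ℕ) (z : A) : A :=
  (∏ j ∈ Finset.range k, (z - j)) * ∏ i, (z - μ i - k)

/-- The product `H̃_μ(z) H̃_μ(z - 1)⋯H̃_μ(z - k + 1)` in its cancelled form. -/
noncomputable def hProduct (μ : Fin n → ℕ) (k : ℕ) (z : A) : A :=
  hNumerator μ k z * ∏ i, Ring.inverse (z - μ i)

/-- The rational function whose iterated residue the theorem computes. -/
noncomputable def integrand (μ : Fin n → ℕ) (k : Fin l → ℕ) (z : Fin l → A) : A :=
  (∏ r, hProduct μ (k r) (z r)) *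
    ∏ s, ∏ t, if s < t then crossFactor (z s) (z t) (k s) (k t) else 1

/-- The factors of the integrand in the variables `x, z₁, …, z_l` other than
`H̃_μ(x)⋯H̃_μ(x - k₀ + 1)`: these have no pole at `x = μᵢ`. -/
noncomputable def crossedIntegrand (μ : Fin n → ℕ) (k₀ : ℕ) (k : Fin l → ℕ) (x : A)
    (z : Fin l → A) : A :=
  (∏ t, crossFactor x (z t) k₀ (k t)) * integrand μ k z

theorem integrand_succ (μ : Fin n → ℕ) (k : Fin (l + 1) → ℕ) (z : Fin (l + 1) → A) :
    integrand μ k z =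
      hProduct μ (k 0) (z 0) * crossedIntegrand μ (k 0) (Fin.tail k) (z 0) (Fin.tail z) := by
  simp only [crossedIntegrand, integrand, Fin.tail, Fin.prod_univ_succ, Fin.succ_pos,
    Fin.succ_lt_succ_iff, Fin.not_lt_zero, if_true, if_false, one_mul]
  ring

theorem map_ringInverse (f : A →+* B) {a : A} (ha : IsUnit a) :
    f (Ring.inverse a) = Ring.inverse (f a) := by
  obtain ⟨u, rfl⟩ := ha
  rw [Ring.inverse_unit]
  exact (Ring.inverse_unit (Units.map (f : A →* B) u)).symm

theorem map_hNumerator (f : A →+* B) (μ : Fin n → ℕ) (k : ℕ) (z : A) :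
    f (hNumerator μ k z) = hNumerator μ k (f z) := by
  simp only [hNumerator, map_mul, map_prod, map_sub, map_natCast]

theorem map_hProduct (f : A →+* B) (μ : Fin n → ℕ) (k : ℕ) {z : A}
    (hz : ∀ m : ℕ, IsUnit (z - m)) : f (hProduct μ k z) = hProduct μ k (f z) := by
  simp only [hProduct, map_mul, map_prod, map_hNumerator, map_ringInverse f (hz _), map_sub,
    map_natCast]

theorem map_crossFactor (f : A →+* B) {a b : A} (ka kb : ℕ)
    (hab : ∀ m : ℤ, IsUnit (a - b + m)) :
    f (crossFactor a b ka kb) = crossFactor (f a) (f b) ka kb := by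
  have hden : IsUnit ((a - b - ka) * (a - b + kb)) := by
    simpa [sub_eq_add_neg] using (hab (-ka)).mul (hab kb)
  simp only [crossFactor, map_mul, map_ringInverse f hden, map_sub, map_add, map_natCast]

/-- The variables `z₁, …, z_l` avoid the poles of every integrand. -/
structure IsShiftGeneric (z : Fin l → A) : Prop where
  isUnit_sub_natCast : ∀ r, ∀ m : ℕ, IsUnit (z r - m)
  isUnit_sub_add_intCast : ∀ ⦃s t⦄, s < t → ∀ m : ℤ, IsUnit (z s - z t + m)

theorem map_integrand (f : A →+* B) (μ : Fin n → ℕ) (k : Fin l → ℕ) {z : Fin l → A}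
    (hz : IsShiftGeneric z) : f (integrand μ k z) = integrand μ k (f ∘ z) := by
  simp only [integrand, map_mul, map_prod]
  congr 1
  · exact Finset.prod_congr rfl fun r _ => map_hProduct f μ (k r) (hz.isUnit_sub_natCast r)
  · refine Finset.prod_congr rfl fun s _ => Finset.prod_congr rfl fun t _ => ?_
    split_ifs with hst
    · exact map_crossFactor f _ _ (hz.isUnit_sub_add_intCast hst)
    · exact map_one f

theorem map_crossedIntegrand (f : A →+* B) (μ : Fin n → ℕ) (k₀ : ℕ) (k : Fin l → ℕ) {x : A}
    {z : Fin l → A} (hx : ∀ t, ∀ m : ℤ, IsUnit (x - z t + m)) (hz : IsShiftGeneric z) :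
    f (crossedIntegrand μ k₀ k x z) = crossedIntegrand μ k₀ k (f x) (f ∘ z) := by
  rw [crossedIntegrand, map_mul, map_prod, map_integrand f μ k hz, crossedIntegrand]
  exact congrArg (· * _) (Finset.prod_congr rfl fun t _ => map_crossFactor f k₀ (k t) (hx t))

end Integrand

theorem prod_comp_update {ι α M : Type*} [Fintype ι] [DecidableEq ι] [CommMonoid M]
    (g : α → M) (f : ι → α) (i : ι) (a : α) :
    ∏ j, g (Function.update f i a j) = g a * ∏ j ∈ Finset.univ.erase i, g (f j) := by
  rw [← Finset.sdiff_singleton_eq_erase, ← Finset.prod_update_of_mem (Finset.mem_univ i)]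
  exact Finset.prod_congr rfl fun j _ => Function.apply_update (fun _ => g) f i a j

theorem prod_HtildeOf_eq_hProduct {F : Type} [Field F] {n : ℕ} (μ : Fin n → ℕ) (k : ℕ) {z : F}
    (hz : ∀ m : ℕ, z - m ≠ 0) :
    ∏ j ∈ Finset.range k, HtildeOf n μ (z - j) = hProduct μ k z := by
  induction k with
  | zero =>
    simp [hProduct, hNumerator, Finset.prod_ne_zero_iff.2 fun i _ => hz (μ i)]
  | succ k ih =>
    have hden : ∏ i, (z - μ i - k) ≠ 0 := Finset.prod_ne_zero_iff.2 fun i _ => by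
      simpa [sub_sub] using hz (μ i + k)
    have hshift (i : Fin n) : z - k - μ i = z - μ i - k := sub_right_comm _ _ _
    have hsucc (i : Fin n) : z - μ i - k - 1 = z - μ i - (k + 1 : ℕ) := by push_cast; ring
    rw [Finset.prod_range_succ, ih, HtildeOf, hProduct, hProduct, hNumerator, hNumerator,
      Finset.prod_range_succ]
    simp only [hshift, hsucc]
    field_simp

section IntegrandField

variable {F : Type*} [Field F] {n l : ℕ}

theorem crossFactor_mul_hProduct (μ : Fin n → ℕ) (i : Fin n) {k₀ : ℕ} (hk₀ : k₀ ≤ μ i) (k : ℕ)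
    {z : F} (hz : ∀ m : ℕ, z - m ≠ 0) :
    crossFactor (μ i : F) z k₀ k * hProduct μ k z =
      hProduct (Function.update μ i (μ i - k₀)) k z := by
  have hi : z - μ i ≠ 0 := hz (μ i)
  have hadd : (μ i : F) - z + k ≠ 0 := fun h => hz (μ i + k) (by push_cast; linear_combination -h)
  have hsub : (μ i : F) - z - k₀ ≠ 0 := fun h =>
    hz (μ i - k₀) (by push_cast [Nat.cast_sub hk₀]; linear_combination -h)
  have hsub' : z - (μ i - k₀ : F) ≠ 0 := fun h => hsub (by linear_combination -h)
  simp only [crossFactor, hProduct, hNumerator, Ring.inverse_eq_inv']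
  rw [prod_comp_update (fun m : ℕ => z - (m : F) - k),
    prod_comp_update fun m : ℕ => (z - (m : F))⁻¹,
    ← Finset.mul_prod_erase _ _ (Finset.mem_univ i),
    ← Finset.mul_prod_erase _ (fun j => (z - (μ j : F))⁻¹) (Finset.mem_univ i),
    Nat.cast_sub hk₀]
  field_simp
  ring

theorem crossedIntegrand_natCast (μ : Fin n → ℕ) (i : Fin n) {k₀ : ℕ} (hk₀ : k₀ ≤ μ i)
    (k : Fin l → ℕ) {z : Fin l → F} (hz : ∀ r, ∀ m : ℕ, z r - m ≠ 0) :
    crossedIntegrand μ k₀ k (μ i : F) z = integrand (Function.update μ i (μ i - k₀)) k z := by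
  rw [crossedIntegrand, integrand, integrand, ← mul_assoc, ← Finset.prod_mul_distrib]
  exact congrArg (· * _) (Finset.prod_congr rfl fun t _ =>
    crossFactor_mul_hProduct μ i hk₀ (k t) (hz t))

theorem hNumerator_natCast_of_lt (μ : Fin n → ℕ) {i : Fin n} {k : ℕ} (h : μ i < k) :
    hNumerator μ k (μ i : F) = 0 := by
  rw [hNumerator, Finset.prod_eq_zero (Finset.mem_range.2 h) (sub_self _), zero_mul]

end IntegrandField

section Recursion

open IterLaurent

variable {n l : ℕ}

theorem isShiftGeneric_var (A : Type) [CommRing A] (l : ℕ) :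
    IsShiftGeneric fun r : Fin l => (var l r : IterLaurent A l) where
  isUnit_sub_natCast r m := by
    simpa using isUnit_var_sub_const r.2 (m : A)
  isUnit_sub_add_intCast s t hst m := by
    simpa using isUnit_var_sub_var_add_const hst t.2 (m : A)

theorem isUnit_const_sub_var_add_intCast {A : Type} [CommRing A] (a : A) (t : Fin l) (m : ℤ) :
    IsUnit (const l a - var l t + (m : IterLaurent A l)) := by
  have h := (isUnit_var_sub_const t.2 (a + (m : A))).neg
  rwa [neg_sub, map_add, map_intCast, add_sub_right_comm] at h

theorem zVar_sub_natCast_ne_zero {l r : ℕ} (hr : r < l) (m : ℕ) : zVar l r - m ≠ 0 := by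
  have h := ((isUnit_var_sub_const hr (m : Polynomial ℚ)).map (toItLT (evalToItLT 0) l)).ne_zero
  rw [map_natCast, map_sub, map_natCast, toItLT_var _ hr, Nat.zero_add r] at h
  rwa [Nat.zero_add l] at h

/-- The coefficient of `z₁⁻¹⋯z_l⁻¹` in the integrand. -/
noncomputable def iteratedResidue (μ : Fin n → ℕ) (k : Fin l → ℕ) : ℚ :=
  extractInv l (integrand μ k fun r => zVar l r)

/-- The residue at `z = μᵢ` of `H̃_μ(z) H̃_μ(z - 1)⋯H̃_μ(z - k + 1)`, for pairwise distinct
`μ₁, …, μₙ`. -/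
noncomputable def hResidue (μ : Fin n → ℕ) (k : ℕ) (i : Fin n) : ℚ :=
  hNumerator μ k (μ i : ℚ) * ∏ j ∈ Finset.univ.erase i, ((μ i : ℚ) - μ j)⁻¹

theorem toItLT_crossedIntegrand {d : ℕ} (f : Polynomial ℚ →+* ItLT d) (μ : Fin n → ℕ) (k₀ : ℕ)
    (k : Fin l → ℕ) :
    toItLT f l (crossedIntegrand μ k₀ k (const l .X) fun r => var l r) =
      crossedIntegrand μ k₀ k (liftItLT d l (f .X)) fun r => zVar (d + l) (d + r) := by
  rw [map_crossedIntegrand _ _ _ _ (isUnit_const_sub_var_add_intCast _) (isShiftGeneric_var _ l),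
    toItLT_const]
  congr 1
  exact funext fun r => toItLT_var f r.2

theorem integrand_zVar_succ (μ : Fin n → ℕ) (k : Fin (l + 1) → ℕ) :
    integrand μ k (fun r => zVar (1 + l) r) =
      toItLT polynomialToItLT l (const l (hNumerator μ (k 0) .X) *
        crossedIntegrand μ (k 0) (Fin.tail k) (const l .X) fun r => var l r) *
      ∏ i, (zVar (1 + l) 0 - (μ i : ItLT (1 + l)))⁻¹ := by
  have hX : liftItLT 1 l (polynomialToItLT .X) = zVar (1 + l) 0 := by
    rw [polynomialToItLT_X, liftItLT_zVar Nat.one_pos]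
  have htail : Fin.tail (fun r : Fin (l + 1) => zVar (1 + l) r) =
      fun r : Fin l => zVar (1 + l) (1 + r) :=
    funext fun r => by rw [Fin.tail, Fin.val_succ, Nat.add_comm (r : ℕ) 1]
  rw [map_mul, toItLT_crossedIntegrand, toItLT_const, map_hNumerator, map_hNumerator, hX,
    integrand_succ, htail, hProduct]
  simp only [Ring.inverse_eq_inv', Fin.val_zero]
  exact mul_right_comm _ _ _

theorem extractInv_toItLT_evalToItLT_crossedIntegrand {μ : Fin n → ℕ} {i : Fin n} {k₀ : ℕ}
    (hk₀ : k₀ ≤ μ i) (k : Fin l → ℕ) :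
    extractInv (0 + l) (toItLT (evalToItLT (μ i)) l
        (crossedIntegrand μ k₀ k (const l .X) fun r => var l r)) =
      iteratedResidue (Function.update μ i (μ i - k₀)) k := by
  have hX : evalToItLT (μ i) .X = (μ i : ItLT 0) := Polynomial.eval_X
  rw [toItLT_crossedIntegrand, hX, map_natCast]
  simp only [Nat.zero_add]
  rw [crossedIntegrand_natCast μ i hk₀ k fun r =>
      zVar_sub_natCast_ne_zero (r.2.trans_eq (Nat.zero_add l).symm),
    iteratedResidue, Nat.zero_add]

theorem iteratedResidue_succ {μ : Fin n → ℕ} (hμ : Function.Injective μ) (k : Fin (l + 1) → ℕ) :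
    iteratedResidue μ k = ∑ i, if k 0 ≤ μ i then
      hResidue μ (k 0) i * iteratedResidue (Function.update μ i (μ i - k 0)) (Fin.tail k)
    else 0 := by
  have hcomm : iteratedResidue μ k =
      extractInv (1 + l) (integrand μ k fun r => zVar (1 + l) r) := by
    rw [iteratedResidue, Nat.add_comm 1 l]
  rw [hcomm, integrand_zVar_succ, extractInv_const_mul_prod_inv hμ]
  refine Finset.sum_congr rfl fun i _ => ?_
  have heval : (hNumerator μ (k 0) (.X : Polynomial ℚ)).eval (μ i : ℚ) =
      hNumerator μ (k 0) (μ i : ℚ) := by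
    rw [← Polynomial.coe_evalRingHom, map_hNumerator, Polynomial.coe_evalRingHom,
      Polynomial.eval_X]
  rw [heval, ← hResidue]
  split_ifs with hi
  · rw [extractInv_toItLT_evalToItLT_crossedIntegrand hi]
  · rw [hResidue, hNumerator_natCast_of_lt μ (not_le.1 hi), zero_mul, zero_mul]

end Recursion

section Vandermonde

variable {R : Type*} [CommRing R] {n : ℕ}

open Matrix

theorem det_vandermonde_finCons (x : R) (u : Fin n → R) :
    (vandermonde (Fin.cons x u : Fin (n + 1) → R)).det =
      (∏ j, (u j - x)) * (vandermonde u).det := by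
  rw [det_vandermonde, det_vandermonde, Fin.prod_univ_succ, Fin.prod_Ioi_zero]
  simp only [Fin.Ioi_succ, Finset.prod_map, Fin.coe_succEmb, Fin.cons_zero, Fin.cons_succ]

theorem det_vandermonde_insertNth (i : Fin (n + 1)) (x : R) (u : Fin n → R) :
    (vandermonde (i.insertNth x u : Fin (n + 1) → R)).det =
      (-1) ^ (i : ℕ) * (∏ j, (u j - x)) * (vandermonde u).det := by
  have h := det_permute i.cycleRange (vandermonde (Fin.cons x u : Fin (n + 1) → R))
  rw [Fin.sign_cycleRange, det_vandermonde_finCons] at h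
  rw [← Fin.cons_comp_cycleRange, mul_assoc]
  exact h.trans (by push_cast; rfl)

theorem prod_erase_eq_prod_succAbove {M : Type*} [CommMonoid M] (i : Fin (n + 1))
    (f : Fin (n + 1) → M) :
    ∏ j ∈ Finset.univ.erase i, f j = ∏ j, f (i.succAbove j) := by
  rw [← Finset.compl_singleton, ← Fin.image_succAbove_univ,
    Finset.prod_image i.succAbove_right_injective.injOn]

theorem det_vandermonde_update_mul_prod (v : Fin n → R) (i : Fin n) (x : R) :
    (vandermonde (Function.update v i x)).det * ∏ j ∈ Finset.univ.erase i, (v i - v j) =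
      (vandermonde v).det * ∏ j ∈ Finset.univ.erase i, (x - v j) := by
  cases n with
  | zero => exact i.elim0
  | succ n =>
    have hneg (y : R) : ∏ j, (y - v (i.succAbove j)) =
        (-1) ^ n * ∏ j, (i.removeNth v j - y) := by
      rw [← Fin.prod_const, ← Finset.prod_mul_distrib]
      exact Finset.prod_congr rfl fun j _ => by rw [Fin.removeNth]; ring
    have hv := det_vandermonde_insertNth i (v i) (i.removeNth v)
    rw [Fin.insertNth_self_removeNth] at hv
    rw [← Fin.insertNth_removeNth, det_vandermonde_insertNth, hv, prod_erase_eq_prod_succAbove,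
      prod_erase_eq_prod_succAbove, hneg, hneg]
    ring

end Vandermonde

section ChiTilde

open MvPolynomial

variable {n : ℕ}

/-- The alternant `∑_{w ∈ Sₙ} sgn(w) x^{wδ}`. -/
noncomputable def alternant (n : ℕ) : MvPolynomial (Fin n) ℤ :=
  ∑ w : Equiv.Perm (Fin n), C (Equiv.Perm.sign w : ℤ) * ∏ i, X i ^ (n - 1 - (w i : ℕ))

theorem chiTilde_eq_coeff (μ : Fin n → ℕ) (s : Multiset ℕ) :
    chiTilde n μ s = coeff (Finsupp.equivFunOnFinite.symm μ)
      ((s.map fun m => psum (Fin n) ℤ m).prod * alternant n) :=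
  rfl

theorem coeff_psum_mul {σ R : Type*} [Fintype σ] [DecidableEq σ] [CommSemiring R] (μ : σ → ℕ)
    (k : ℕ) (p : MvPolynomial σ R) :
    coeff (Finsupp.equivFunOnFinite.symm μ) (psum σ R k * p) =
      ∑ i, if k ≤ μ i then
        coeff (Finsupp.equivFunOnFinite.symm (Function.update μ i (μ i - k))) p
      else 0 := by
  rw [psum, Finset.sum_mul, coeff_sum]
  refine Finset.sum_congr rfl fun i _ => ?_
  have hupdate : Finsupp.equivFunOnFinite.symm μ - Finsupp.single i k =
      Finsupp.equivFunOnFinite.symm (Function.update μ i (μ i - k)) := by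
    ext j
    rcases eq_or_ne j i with rfl | hj
    · simp
    · simp [hj]
  rw [X_pow_eq_monomial, coeff_monomial_mul', hupdate, one_mul]
  simp only [Finsupp.single_le_iff, Finsupp.equivFunOnFinite_symm_apply_apply]

theorem chiTilde_cons (μ : Fin n → ℕ) (k : ℕ) (s : Multiset ℕ) :
    chiTilde n μ (k ::ₘ s) =
      ∑ i, if k ≤ μ i then chiTilde n (Function.update μ i (μ i - k)) s else 0 := by
  simp only [chiTilde_eq_coeff, Multiset.map_cons, Multiset.prod_cons, mul_assoc, coeff_psum_mul]

theorem rename_alternant (σ : Equiv.Perm (Fin n)) :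
    rename σ (alternant n) = C (Equiv.Perm.sign σ : ℤ) * alternant n := by
  rw [alternant, map_sum, Finset.mul_sum, ← Equiv.sum_comp (Equiv.mulRight σ)]
  refine Finset.sum_congr rfl fun w _ => ?_
  rw [Equiv.coe_mulRight, map_mul, map_prod, rename_C, Equiv.Perm.sign_mul, Units.val_mul,
    C_mul, mul_comm (C (Equiv.Perm.sign w : ℤ)), mul_assoc]
  simp only [map_pow, rename_X, Equiv.Perm.mul_apply]
  rw [Equiv.prod_comp σ fun i => (X i : MvPolynomial (Fin n) ℤ) ^ (n - 1 - (w i : ℕ))]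

theorem chiTilde_comp_perm (μ : Fin n → ℕ) (σ : Equiv.Perm (Fin n)) (s : Multiset ℕ) :
    chiTilde n (μ ∘ σ) s = Equiv.Perm.sign σ * chiTilde n μ s := by
  have hμ : Finsupp.mapDomain σ (Finsupp.equivFunOnFinite.symm (μ ∘ σ)) =
      Finsupp.equivFunOnFinite.symm μ := by
    ext i
    simp [Finsupp.mapDomain_equiv_apply]
  have hpsum : rename σ (s.map fun m => psum (Fin n) ℤ m).prod =
      (s.map fun m => psum (Fin n) ℤ m).prod := by
    rw [map_multiset_prod, Multiset.map_map]
    exact congrArg _ (Multiset.map_congr rfl fun m _ => rename_psum _ _ m σ)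
  rw [chiTilde_eq_coeff, ← coeff_rename_mapDomain σ σ.injective, hμ, map_mul, hpsum,
    rename_alternant, mul_left_comm, coeff_C_mul, chiTilde_eq_coeff]

theorem chiTilde_eq_zero_of_not_injective {μ : Fin n → ℕ} (hμ : ¬ Function.Injective μ)
    (s : Multiset ℕ) : chiTilde n μ s = 0 := by
  obtain ⟨a, b, hab, hne⟩ := Function.not_injective_iff.1 hμ
  have h := chiTilde_comp_perm μ (Equiv.swap a b) s
  rw [Equiv.comp_swap_eq_update, hab, Function.update_eq_self, ← hab, Function.update_eq_self,
    Equiv.Perm.sign_swap hne, Units.val_neg, Units.val_one, neg_one_mul] at h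
  omega

theorem coeff_sum_X_pow_mul_prod_factorial {σ R : Type*} [Fintype σ] [CommSemiring R]
    (d : σ →₀ ℕ) (m : ℕ) :
    coeff d ((∑ i, X i : MvPolynomial σ R) ^ m) * ∏ i, ((d i).factorial : R) =
      if ∑ i, d i = m then (m.factorial : R) else 0 := by
  rw [coeff_sum_X_pow_of_fintype, Finsupp.sum_fintype _ _ fun _ => rfl,
    Finsupp.multinomial_eq_of_support_subset (Finset.subset_univ _)]
  split_ifs with h
  · rw [← Nat.cast_prod, ← Nat.cast_mul, mul_comm, Nat.multinomial_spec, h]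
  · rw [Nat.cast_zero, zero_mul]

theorem coeff_sum_X_pow_mul_prod_X_pow {σ R : Type*} [Fintype σ] [CommSemiring R]
    (μ d : σ → ℕ) (m : ℕ) :
    coeff (Finsupp.equivFunOnFinite.symm μ) ((∑ i, X i) ^ m * ∏ i, X i ^ d i : MvPolynomial σ R) *
        ∏ i, ((μ i).factorial : R) =
      (if ∑ i, μ i = m + ∑ i, d i then (m.factorial : R) else 0) *
        ∏ i, ((μ i).descFactorial (d i) : R) := by
  have hmonomial : (∏ i, X i ^ d i : MvPolynomial σ R) =
      monomial (Finsupp.equivFunOnFinite.symm d) 1 := by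
    rw [monomial_eq, Finsupp.prod_fintype _ _ fun i => pow_zero _, C_1, one_mul]
    rfl
  rw [hmonomial, coeff_mul_monomial', mul_one]
  by_cases hle : Finsupp.equivFunOnFinite.symm d ≤ Finsupp.equivFunOnFinite.symm μ
  · have hd (i : σ) : d i ≤ μ i := hle i
    have hsum : ∑ i, μ i = m + ∑ i, d i ↔ ∑ i, (μ i - d i) = m := by
      rw [Finset.sum_tsub_distrib _ fun i _ => hd i]
      have := Finset.sum_le_sum fun i (_ : i ∈ Finset.univ) => hd i
      omega
    have hfactorial (i : σ) : ((μ i).factorial : R) =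
        (μ i - d i).factorial * (μ i).descFactorial (d i) := by
      rw [← Nat.cast_mul, Nat.factorial_mul_descFactorial (hd i)]
    have hcoeff := coeff_sum_X_pow_mul_prod_factorial (R := R)
      (Finsupp.equivFunOnFinite.symm μ - Finsupp.equivFunOnFinite.symm d) m
    simp only [Finsupp.tsub_apply, Finsupp.equivFunOnFinite_symm_apply_apply] at hcoeff
    simp only [hsum, hfactorial, Finset.prod_mul_distrib]
    rw [if_pos hle, ← mul_assoc, hcoeff]
  · obtain ⟨i, hi⟩ : ∃ i, ¬ d i ≤ μ i := not_forall.1 hle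
    have hzero : ((μ i).descFactorial (d i) : R) = 0 := by
      rw [Nat.descFactorial_of_lt (not_le.1 hi), Nat.cast_zero]
    rw [if_neg hle, zero_mul, Finset.prod_eq_zero (Finset.mem_univ i) hzero,
      mul_zero]

theorem sum_sign_mul_prod_descFactorial (μ : Fin n → ℕ) :
    ∑ w : Equiv.Perm (Fin n), (Equiv.Perm.sign w : ℤ) *
        ∏ i, ((μ i).descFactorial (n - 1 - (w i : ℕ)) : ℤ) =
      Equiv.Perm.sign (Fin.revPerm : Equiv.Perm (Fin n)) *
        (Matrix.vandermonde fun i => (μ i : ℤ)).det := by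
  have hdet := Matrix.det_permute' Fin.revPerm
    (Matrix.of fun i j : Fin n => (descPochhammer ℤ j).eval (μ i : ℤ))
  rw [Int.cast_id] at hdet
  rw [Matrix.det_eval_matrixOfPolynomials_eq_det_vandermonde (fun i => (μ i : ℤ))
      (fun j : Fin n => descPochhammer ℤ j) (fun i => descPochhammer_natDegree ℤ i)
      (fun i => monic_descPochhammer ℤ i),
    ← hdet, ← Matrix.det_transpose, Matrix.det_apply']
  refine Finset.sum_congr rfl fun w _ => congrArg _ (Finset.prod_congr rfl fun i _ => ?_)
  rw [Matrix.transpose_apply, Matrix.submatrix_apply, Matrix.of_apply, Fin.revPerm_apply,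
    Fin.val_rev, id, descPochhammer_eval_eq_descFactorial, Nat.sub_sub, Nat.add_comm 1]

theorem chiTilde_replicate_one_mul_prod_factorial (μ : Fin n → ℕ) (m : ℕ) :
    chiTilde n μ (Multiset.replicate m 1) * ∏ i, ((μ i).factorial : ℤ) =
      (if ∑ i, μ i = m + ∑ i : Fin n, (n - 1 - (i : ℕ)) then (m.factorial : ℤ) else 0) *
        (Equiv.Perm.sign (Fin.revPerm : Equiv.Perm (Fin n)) *
          (Matrix.vandermonde fun i => (μ i : ℤ)).det) := by
  rw [chiTilde_eq_coeff, Multiset.map_replicate, Multiset.prod_replicate, psum_one, alternant,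
    Finset.mul_sum, coeff_sum, Finset.sum_mul, ← sum_sign_mul_prod_descFactorial, Finset.mul_sum]
  refine Finset.sum_congr rfl fun w _ => ?_
  rw [mul_left_comm, coeff_C_mul, mul_assoc, coeff_sum_X_pow_mul_prod_X_pow,
    Equiv.sum_comp w fun i => n - 1 - (i : ℕ), mul_left_comm]

theorem chiTilde_replicate_one_update {μ : Fin n → ℕ} {m k : ℕ} {i : Fin n} (hki : k ≤ μ i)
    (hkm : k ≤ m) :
    m.descFactorial k *
        chiTilde n (Function.update μ i (μ i - k)) (Multiset.replicate (m - k) 1) *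
          ∏ j ∈ Finset.univ.erase i, ((μ i : ℤ) - μ j) =
      chiTilde n μ (Multiset.replicate m 1) * (μ i).descFactorial k *
        ∏ j ∈ Finset.univ.erase i, ((μ i : ℤ) - k - μ j) := by
  have hweight : ∑ j, Function.update μ i (μ i - k) j = m - k + ∑ i : Fin n, (n - 1 - (i : ℕ)) ↔
      ∑ j, μ j = m + ∑ i : Fin n, (n - 1 - (i : ℕ)) := by
    rw [Finset.sum_update_of_mem (Finset.mem_univ i), Finset.sdiff_singleton_eq_erase,
      ← Finset.add_sum_erase _ μ (Finset.mem_univ i)]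
    omega
  have hfactorial (c : Prop) [Decidable c] : (if c then (m.factorial : ℤ) else 0) =
      (if c then ((m - k).factorial : ℤ) else 0) * m.descFactorial k := by
    rw [ite_mul, zero_mul, ← Nat.cast_mul, Nat.factorial_mul_descFactorial hkm]
  have hvandermonde := det_vandermonde_update_mul_prod (fun j => (μ j : ℤ)) i (μ i - k : ℕ)
  have hcast : Function.update (fun j => (μ j : ℤ)) i (μ i - k : ℕ) =
      fun j => (Function.update μ i (μ i - k) j : ℤ) :=
    (Function.comp_update Nat.cast μ i (μ i - k)).symm
  rw [hcast, Nat.cast_sub hki] at hvandermonde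
  have hμ := chiTilde_replicate_one_mul_prod_factorial μ m
  rw [← Finset.mul_prod_erase _ _ (Finset.mem_univ i), ← Nat.factorial_mul_descFactorial hki,
    hfactorial, Nat.cast_mul] at hμ
  have hupdate := chiTilde_replicate_one_mul_prod_factorial (Function.update μ i (μ i - k)) (m - k)
  simp only [prod_comp_update fun a : ℕ => (a.factorial : ℤ), hweight] at hupdate
  have hne : ((μ i - k).factorial : ℤ) * ∏ j ∈ Finset.univ.erase i, ((μ j).factorial : ℤ) ≠ 0 :=
    mul_ne_zero (Nat.cast_ne_zero.2 (Nat.factorial_ne_zero _))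
      (Finset.prod_ne_zero_iff.2 fun j _ => Nat.cast_ne_zero.2 (Nat.factorial_ne_zero _))
  refine mul_right_cancel₀ hne ?_
  linear_combination
    m.descFactorial k * (∏ j ∈ Finset.univ.erase i, ((μ i : ℤ) - μ j)) * hupdate -
    (∏ j ∈ Finset.univ.erase i, ((μ i : ℤ) - k - μ j)) * hμ +
    m.descFactorial k * (if ∑ j, μ j = m + ∑ i : Fin n, (n - 1 - (i : ℕ)) then
      ((m - k).factorial : ℤ) else 0) *
      Equiv.Perm.sign (Fin.revPerm : Equiv.Perm (Fin n)) * hvandermonde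

end ChiTilde

section MainInduction

variable {n l : ℕ}

theorem hNumerator_natCast {R : Type*} [CommRing R] (μ : Fin n → ℕ) (k : ℕ) (i : Fin n) :
    hNumerator μ k (μ i : R) =
      -k * (μ i).descFactorial k * ∏ j ∈ Finset.univ.erase i, ((μ i : R) - k - μ j) := by
  rw [hNumerator, ← descPochhammer_eval_eq_prod_range, descPochhammer_eval_eq_descFactorial,
    ← Finset.mul_prod_erase _ _ (Finset.mem_univ i), sub_self, zero_sub]
  simp only [sub_right_comm]
  ring

theorem chiTilde_replicate_one_mul_hResidue {μ : Fin n → ℕ} (hμ : Function.Injective μ)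
    {m k : ℕ} {i : Fin n} (hki : k ≤ μ i) (hkm : k ≤ m) :
    chiTilde n μ (Multiset.replicate m 1) * hResidue μ k i =
      -k * m.descFactorial k *
        chiTilde n (Function.update μ i (μ i - k)) (Multiset.replicate (m - k) 1) := by
  have hne : ∏ j ∈ Finset.univ.erase i, ((μ i : ℚ) - μ j) ≠ 0 :=
    Finset.prod_ne_zero_iff.2 fun j hj =>
      sub_ne_zero.2 <| Nat.cast_injective.ne <| hμ.ne (Finset.ne_of_mem_erase hj).symm
  have h := congrArg (Int.cast : ℤ → ℚ) (chiTilde_replicate_one_update hki hkm)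
  push_cast at h
  rw [hResidue, hNumerator_natCast, Finset.prod_inv_distrib, ← mul_assoc, ← div_eq_mul_inv,
    div_eq_iff hne]
  linear_combination k * h

theorem iteratedResidue_zero (μ : Fin n → ℕ) (k : Fin 0 → ℕ) : iteratedResidue μ k = 1 := by
  rw [iteratedResidue, integrand, Finset.univ_eq_empty, Finset.prod_empty, Finset.prod_empty,
    mul_one]
  rfl

theorem chiTilde_eq_iteratedResidue (μ : Fin n → ℕ) (k : Fin l → ℕ) {m : ℕ}
    (hk : ∑ r, k r ≤ m) :
    (-1 : ℚ) ^ l * m.descFactorial (∑ r, k r) * (∏ r, (k r : ℚ)) *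
        chiTilde n μ (Multiset.map k Finset.univ.val + Multiset.replicate (m - ∑ r, k r) 1) =
      chiTilde n μ (Multiset.replicate m 1) * iteratedResidue μ k := by
  induction l generalizing m μ with
  | zero => simp [iteratedResidue_zero]
  | succ l ih =>
    by_cases hμ : Function.Injective μ
    case neg => simp only [chiTilde_eq_zero_of_not_injective hμ, Int.cast_zero, mul_zero, zero_mul]
    have hsum : ∑ r, k r = k 0 + ∑ r, Fin.tail k r := Fin.sum_univ_succ k
    have hmap : Multiset.map k Finset.univ.val =
        k 0 ::ₘ Multiset.map (Fin.tail k) Finset.univ.val := by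
      rw [Fin.univ_val_map, Fin.univ_val_map, List.ofFn_succ]
      rfl
    have hdescFactorial : m.descFactorial (k 0 + ∑ r, Fin.tail k r) =
        (m - k 0).descFactorial (∑ r, Fin.tail k r) * m.descFactorial (k 0) := by
      rw [← Nat.descFactorial_mul_descFactorial (Nat.le_add_right _ _), Nat.add_sub_cancel_left]
    rw [iteratedResidue_succ hμ, Fin.prod_univ_succ, hsum, hmap, Multiset.cons_add, chiTilde_cons,
      hdescFactorial, ← Nat.sub_sub, Int.cast_sum, Finset.mul_sum, Finset.mul_sum]
    refine Finset.sum_congr rfl fun i _ => ?_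
    split_ifs with hi
    case neg => simp only [Int.cast_zero, mul_zero]
    have hresidue := chiTilde_replicate_one_mul_hResidue hμ hi (m := m) (by omega)
    have htail := ih (Function.update μ i (μ i - k 0)) (Fin.tail k) (m := m - k 0) (by omega)
    have hprod : ∏ r : Fin l, (k r.succ : ℚ) = ∏ r, (Fin.tail k r : ℚ) := rfl
    rw [hprod, Nat.cast_mul, pow_succ]
    linear_combination -(k 0 : ℚ) * m.descFactorial (k 0) * htail -
      iteratedResidue (Function.update μ i (μ i - k 0)) (Fin.tail k) * hresidue

theorem prod_HtildeOf_mul_prod_eq_integrand (μ : Fin n → ℕ) (k : Fin l → ℕ) :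
    (∏ r : Fin l, ∏ j ∈ Finset.range (k r), HtildeOf n μ (zVar l r - (j : ItLT l))) *
        ∏ p ∈ Finset.univ.filter (fun p : Fin l × Fin l => p.1 < p.2),
          ((zVar l p.1 - zVar l p.2) *
              (zVar l p.1 - zVar l p.2 + (k p.2 : ItLT l) - (k p.1 : ItLT l))) /
            ((zVar l p.1 - zVar l p.2 - (k p.1 : ItLT l)) *
              (zVar l p.1 - zVar l p.2 + (k p.2 : ItLT l))) =
      integrand μ k fun r => zVar l r := by
  rw [Finset.prod_filter, Fintype.prod_prod_type]
  simp only [prod_HtildeOf_eq_hProduct μ _ (zVar_sub_natCast_ne_zero (Fin.is_lt _)), integrand,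
    crossFactor, Ring.inverse_eq_inv', div_eq_mul_inv]

end MainInduction

theorem frobenius_formula_lemma_general (m n : ℕ) (μ : Fin n → ℕ)
    (l : ℕ) (k : Fin l → ℕ)
    (hK : ∑ r, k r ≤ m) :
    (-1 : ℚ) ^ l * (Nat.descFactorial m (∑ r, k r) : ℚ) * (∏ r, (k r : ℚ)) *
        (chiTilde n μ
          (Multiset.map k Finset.univ.val +
            Multiset.replicate (m - ∑ r, k r) 1) : ℚ) =
      (chiTilde n μ (Multiset.replicate m 1) : ℚ) *
        extractInv l
          ((∏ r : Fin l, ∏ j ∈ Finset.range (k r),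
              HtildeOf n μ (zVar l r - (j : ItLT l))) *
            ∏ p ∈ Finset.univ.filter (fun p : Fin l × Fin l => p.1 < p.2),
              ((zVar l p.1 - zVar l p.2) *
                  (zVar l p.1 - zVar l p.2 + (k p.2 : ItLT l) - (k p.1 : ItLT l))) /
                ((zVar l p.1 - zVar l p.2 - (k p.1 : ItLT l)) *
                  (zVar l p.1 - zVar l p.2 + (k p.2 : ItLT l)))) := by
  rw [prod_HtildeOf_mul_prod_eq_integrand, chiTilde_eq_iteratedResidue μ k hK, iteratedResidue]

/-- key lemma for the generalized Frobenius formula: for any tuple `μ` of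
non-negative integers and positive integers `k₁,…,k_l` with `K = k₁+⋯+k_l ≤ n`,
`(-1)^l (n)_K k₁⋯k_l χ̃^μ_{(k₁,…,k_l,1^{n-K})} = χ̃^μ_{(1^n)} ⋅
[z₁^{-1}]⋯[z_l^{-1}] [∏_r H̃_μ(z_r)⋯H̃_μ(z_r-k_r+1) ⋅
∏_{s<t} (z_s-z_t)(z_s-z_t+k_t-k_s)/((z_s-z_t-k_s)(z_s-z_t+k_t))]`. -/
theorem frobenius_formula_lemma (n : ℕ) (μ : Fin n → ℕ)
    (l : ℕ) (k : Fin l → ℕ) (hk : ∀ r, 1 ≤ k r)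
    (hK : ∑ r, k r ≤ n) :
    (-1 : ℚ) ^ l * (Nat.descFactorial n (∑ r, k r) : ℚ) * (∏ r, (k r : ℚ)) *
        (chiTilde n μ
          (Multiset.map k Finset.univ.val +
            Multiset.replicate (n - ∑ r, k r) 1) : ℚ) =
      (chiTilde n μ (Multiset.replicate n 1) : ℚ) *
        extractInv l
          ((∏ r : Fin l, ∏ j ∈ Finset.range (k r),
              HtildeOf n μ (zVar l r - (j : ItLT l))) *
            ∏ p ∈ Finset.univ.filter (fun p : Fin l × Fin l => p.1 < p.2),
              ((zVar l p.1 - zVar l p.2) *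
                  (zVar l p.1 - zVar l p.2 + (k p.2 : ItLT l) - (k p.1 : ItLT l))) /
                ((zVar l p.1 - zVar l p.2 - (k p.1 : ItLT l)) *
                  (zVar l p.1 - zVar l p.2 + (k p.2 : ItLT l)))) :=
  frobenius_formula_lemma_general n n μ l k hK
end

section
/- Let p, q be positive integers and let λ be the rectangular partition p × q consisting of p parts all equal to q (a partition of n = pq). Then its reciprocal Cauchy transform equals H(z) = (z−q)(z+p)/(z+p−q), and consequently, for every real ζ ≥ 0, the shifted Boolean cumulants of λ with respect to the shift ζ are given by B̃_i = −pq·(q−p−ζ)^{i−2} for every integer i ≥ 2. -/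
open scoped BigOperators

/-- The shifted Boolean cumulant `B̃_k` (with respect to the shift `ζ`) of a partition
`λ` of `n`: the coefficient of `z^{-(k-1)}` in the expansion at infinity
`H(z+ζ) = z + ζ + B̃₂ z^{-1} + ⋯` of the reciprocal Cauchy transform
`H(z) = (z+n) ⋅ ∏ᵢ (z-λᵢ+i-1) / ∏ᵢ (z-λᵢ+i)` (1-indexed products), computed in the
field of formal Laurent series in `X = z⁻¹`. -/
noncomputable def shiftedBoolean (n : ℕ) (lam : Fin n → ℕ) (ζ : ℝ) (k : ℕ) : ℝ :=
  let X : LaurentSeries ℝ := HahnSeries.single (1 : ℤ) (1 : ℝ)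
  let w : LaurentSeries ℝ := X⁻¹ + (HahnSeries.C ζ : LaurentSeries ℝ)
  HahnSeries.coeff
    ((w + (n : LaurentSeries ℝ)) *
        (∏ i : Fin n, (w - (lam i : LaurentSeries ℝ) + ((i : ℕ) : LaurentSeries ℝ))) /
      ∏ i : Fin n, (w - (lam i : LaurentSeries ℝ) + ((i : ℕ) : LaurentSeries ℝ) + 1))
    ((k : ℤ) - 1)

/-!
Consecutive factors telescope: `(y + n) ∏ (y + i) = (y + m) ∏ (y + i + 1)` over `m ≤ i < n`. For a
rectangle the products split into the `p` parts equal to `q` (with `y = z - q`) and the zero parts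
(with `y = z`), so `H` collapses to `(z - q)(z + p)/(z + p - q) = z - pq/(z + p - q)`. After the
shift by `ζ` the last fraction is `pq/(z - c)` with `c = q - p - ζ`, a geometric series in `z⁻¹`.
-/

open Finset

/-- The reciprocal Cauchy transform `H` of the sequence of parts `lam`, evaluated at a point `z` of
an arbitrary field, so that rational functions and Laurent series can both be substituted.
The index `i` starts at `0`, and the value is `0` where the denominator vanishes. -/
def reciprocalCauchyTransform {K : Type*} [Field K] (n : ℕ) (lam : Fin n → ℕ) (z : K) : K :=
  (z + n) * (∏ i : Fin n, (z - lam i + (i : ℕ))) / ∏ i : Fin n, (z - lam i + (i : ℕ) + 1)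

/-- The rectangular partition with `p` parts equal to `q`, padded with zeros to length `n`.
The partition is truncated if `n < p`. -/
def rectangularParts (n p q : ℕ) : Fin n → ℕ :=
  fun j => if (j : ℕ) < p then q else 0

theorem prod_Ico_add_natCast_mul {R : Type*} [CommSemiring R] (y : R) {m n : ℕ} (hmn : m ≤ n) :
    (∏ i ∈ Ico m n, (y + i)) * (y + n) = (y + m) * ∏ i ∈ Ico m n, (y + i + 1) := by
  induction n, hmn using Nat.le_induction with
  | base => simp
  | succ n hmn ih =>
    rw [prod_Ico_succ_top hmn, prod_Ico_succ_top hmn, ih]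
    push_cast
    ring

theorem prod_rectangularParts {M : Type*} [CommMonoid M] (f : ℕ → ℕ → M) {n p : ℕ} (hpn : p ≤ n)
    (q : ℕ) :
    ∏ i : Fin n, f (rectangularParts n p q i) i =
      (∏ i ∈ Ico 0 p, f q i) * ∏ i ∈ Ico p n, f 0 i := by
  unfold rectangularParts
  rw [Fin.prod_univ_eq_prod_range (fun i => f (if i < p then q else 0) i), range_eq_Ico,
    ← prod_Ico_consecutive _ p.zero_le hpn]
  congr 1 <;> refine prod_congr rfl fun i hi => ?_
  · rw [if_pos (mem_Ico.mp hi).2]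
  · rw [if_neg (mem_Ico.mp hi).1.not_gt]

theorem rectangularParts_prod_telescope {R : Type*} [CommRing R] (z : R) {n p : ℕ} (hpn : p ≤ n)
    (q : ℕ) :
    (z + n) * (∏ i : Fin n, (z - rectangularParts n p q i + (i : ℕ))) * (z + p - q) =
      (z - q) * (z + p) * ∏ i : Fin n, (z - rectangularParts n p q i + (i : ℕ) + 1) := by
  rw [prod_rectangularParts (fun a i => z - (a : R) + i) hpn,
    prod_rectangularParts (fun a i => z - (a : R) + i + 1) hpn]
  have full_parts := prod_Ico_add_natCast_mul (z - q) p.zero_le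
  have zero_parts := prod_Ico_add_natCast_mul z hpn
  simp only [Nat.cast_zero, add_zero, sub_zero] at full_parts zero_parts ⊢
  linear_combination
    (∏ i ∈ Ico p n, (z + i)) * (z + n) * full_parts +
      (z - q) * (∏ i ∈ Ico 0 p, (z - q + i + 1)) * zero_parts

theorem reciprocalCauchyTransform_rectangularParts {K : Type*} [Field K] {z : K}
    (hz : ∀ m : ℤ, z + m ≠ 0) {n p : ℕ} (hpn : p ≤ n) (q : ℕ) :
    reciprocalCauchyTransform n (rectangularParts n p q) z =
      (z - q) * (z + p) / (z + p - q) := by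
  have hden : ∏ i : Fin n, (z - rectangularParts n p q i + (i : ℕ) + 1) ≠ 0 :=
    prod_ne_zero_iff.mpr fun i _ => by
      convert hz (-rectangularParts n p q i + (i : ℕ) + 1) using 1
      push_cast
      ring
  have hpole : z + p - q ≠ 0 := by
    convert hz (p - q) using 1
    push_cast
    ring
  exact (div_eq_div_iff hden hpole).mpr (rectangularParts_prod_telescope z hpn q)

theorem reciprocalCauchyTransform_rectangle {K : Type*} [Field K] {z : K}
    (hz : ∀ m : ℤ, z + m ≠ 0) (p q : ℕ) :
    reciprocalCauchyTransform (p * q) (rectangularParts (p * q) p q) z =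
      (z - q) * (z + p) / (z + p - q) := by
  rcases q.eq_zero_or_pos with rfl | hq
  · have hzp : z + p ≠ 0 := mod_cast hz p
    simp [reciprocalCauchyTransform, hzp]
  · exact reciprocalCauchyTransform_rectangularParts hz (Nat.le_mul_of_pos_right p hq) q

theorem ratFunc_X_add_intCast_ne_zero {F : Type*} [Field F] (m : ℤ) :
    (RatFunc.X : RatFunc F) + m ≠ 0 := by
  simpa using RatFunc.algebraMap_ne_zero (Polynomial.X_add_C_ne_zero (m : F))

theorem sub_mul_add_div_eq_sub {K : Type*} [Field K] {z a b : K} (h : z + b - a ≠ 0) :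
    (z - a) * (z + b) / (z + b - a) = z - a * b * (z + b - a)⁻¹ := by
  field_simp
  ring

theorem powerSeries_one_sub_C_mul_X_mul_mk_pow {R : Type*} [CommRing R] (c : R) :
    (1 - PowerSeries.C c * PowerSeries.X) * PowerSeries.mk (c ^ ·) = 1 := by
  have h := congrArg (PowerSeries.rescale c) (PowerSeries.mk_one_mul_one_sub_eq_one R)
  rw [mul_comm]
  simpa [PowerSeries.rescale_mk, PowerSeries.rescale_X] using h

section LaurentSeries

variable {K : Type*} [Field K]

/-- The variable `z = X⁻¹` at infinity, where `X` is the variable of the Laurent series. -/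
noncomputable def variableAtInfinity (K : Type*) [Field K] : LaurentSeries K :=
  (HahnSeries.single (1 : ℤ) (1 : K))⁻¹

theorem variableAtInfinity_coeff_natCast (k : ℕ) : (variableAtInfinity K).coeff k = 0 := by
  rw [variableAtInfinity, HahnSeries.inv_single, HahnSeries.coeff_single_of_ne (by lia)]

theorem variableAtInfinity_sub_C_mul_geometric (c : K) :
    (variableAtInfinity K - HahnSeries.C c) *
      HahnSeries.ofPowerSeries ℤ K (PowerSeries.X * PowerSeries.mk (c ^ ·)) = 1 := by
  have hX : variableAtInfinity K * HahnSeries.ofPowerSeries ℤ K PowerSeries.X = 1 := by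
    simp [variableAtInfinity]
  have hgeom := congrArg (HahnSeries.ofPowerSeries ℤ K)
    (powerSeries_one_sub_C_mul_X_mul_mk_pow c)
  simp only [map_mul, map_sub, map_one, HahnSeries.ofPowerSeries_C] at hgeom ⊢
  linear_combination hgeom + HahnSeries.ofPowerSeries ℤ K (PowerSeries.mk (c ^ ·)) * hX

theorem variableAtInfinity_sub_C_ne_zero (c : K) : variableAtInfinity K - HahnSeries.C c ≠ 0 :=
  left_ne_zero_of_mul_eq_one (variableAtInfinity_sub_C_mul_geometric c)

theorem coeff_inv_variableAtInfinity_sub_C (c : K) (k : ℕ) :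
    (variableAtInfinity K - HahnSeries.C c)⁻¹.coeff (k + 1 : ℕ) = c ^ k := by
  rw [inv_eq_of_mul_eq_one_right (variableAtInfinity_sub_C_mul_geometric c),
    HahnSeries.ofPowerSeries_apply_coeff, PowerSeries.coeff_succ_X_mul, PowerSeries.coeff_mk]

theorem variableAtInfinity_add_C_add_intCast_ne_zero (ζ : K) (m : ℤ) :
    variableAtInfinity K + HahnSeries.C ζ + (m : LaurentSeries K) ≠ 0 := by
  have h := variableAtInfinity_sub_C_ne_zero (-ζ - m)
  rwa [map_sub, map_neg, map_intCast, neg_sub_left, sub_neg_eq_add, add_comm (m : LaurentSeries K),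
    ← add_assoc] at h

theorem reciprocalCauchyTransform_rectangle_shift (p q : ℕ) (ζ : K) :
    reciprocalCauchyTransform (p * q) (rectangularParts (p * q) p q)
        (variableAtInfinity K + HahnSeries.C ζ) =
      variableAtInfinity K + HahnSeries.C ζ -
        HahnSeries.C ((p : K) * q) *
          (variableAtInfinity K - HahnSeries.C ((q : K) - p - ζ))⁻¹ := by
  have denominator_eq :
      variableAtInfinity K + HahnSeries.C ζ + (p : LaurentSeries K) - (q : LaurentSeries K) =
        variableAtInfinity K - HahnSeries.C ((q : K) - p - ζ) := by
    simp only [map_sub, map_natCast]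
    ring
  rw [reciprocalCauchyTransform_rectangle (variableAtInfinity_add_C_add_intCast_ne_zero ζ),
    sub_mul_add_div_eq_sub (denominator_eq ▸ variableAtInfinity_sub_C_ne_zero _), denominator_eq,
    map_mul, map_natCast, map_natCast, mul_comm (q : LaurentSeries K)]

end LaurentSeries

theorem shiftedBoolean_eq_coeff (n : ℕ) (lam : Fin n → ℕ) (ζ : ℝ) (k : ℕ) :
    shiftedBoolean n lam ζ k =
      (reciprocalCauchyTransform n lam (variableAtInfinity ℝ + HahnSeries.C ζ)).coeff
        ((k : ℤ) - 1) :=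
  rfl

theorem shiftedBoolean_rectangle (p q : ℕ) (ζ : ℝ) (k : ℕ) :
    shiftedBoolean (p * q) (rectangularParts (p * q) p q) ζ (k + 2) =
      -((p : ℝ) * q) * ((q : ℝ) - p - ζ) ^ k := by
  have hindex : ((k + 2 : ℕ) : ℤ) - 1 = (k + 1 : ℕ) := by lia
  have hC : (HahnSeries.C ζ : LaurentSeries ℝ).coeff (k + 1 : ℕ) = 0 :=
    HahnSeries.coeff_single_of_ne (by lia)
  rw [shiftedBoolean_eq_coeff, reciprocalCauchyTransform_rectangle_shift, hindex,
    HahnSeries.coeff_sub, HahnSeries.coeff_add, variableAtInfinity_coeff_natCast, hC,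
    HahnSeries.C_mul_eq_smul, HahnSeries.coeff_smul, coeff_inv_variableAtInfinity_sub_C,
    smul_eq_mul]
  ring

theorem rectangular_cumulants_general {F : Type*} [Field F] (p q : ℕ) :
    reciprocalCauchyTransform (p * q) (rectangularParts (p * q) p q) (RatFunc.X : RatFunc F) =
        (RatFunc.X - (q : RatFunc F)) * (RatFunc.X + (p : RatFunc F)) /
          (RatFunc.X + (p : RatFunc F) - (q : RatFunc F)) ∧
      ∀ ζ : ℝ, ∀ i : ℕ, 2 ≤ i →
        shiftedBoolean (p * q) (rectangularParts (p * q) p q) ζ i =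
          -((p : ℝ) * q) * ((q : ℝ) - p - ζ) ^ (i - 2) := by
  refine ⟨reciprocalCauchyTransform_rectangle ratFunc_X_add_intCast_ne_zero p q, fun ζ i hi => ?_⟩
  obtain ⟨k, rfl⟩ := Nat.exists_eq_add_of_le' hi
  exact shiftedBoolean_rectangle p q ζ k

/-- for the rectangular Young diagram `p × q` (i.e. `p` parts equal to `q`,
a partition of `n = pq`), the reciprocal Cauchy transform is
`H(z) = (z-q)(z+p)/(z+p-q)` (an identity of rational functions), and for every shift
`ζ ≥ 0` the shifted Boolean cumulants are `B̃ᵢ = -pq (q-p-ζ)^{i-2}` for `i ≥ 2`. -/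
theorem rectangular_cumulants (p q : ℕ) (hp : 1 ≤ p) (hq : 1 ≤ q) :
    (((RatFunc.X : RatFunc ℚ) + ((p * q : ℕ) : RatFunc ℚ)) *
          (∏ i : Fin (p * q),
            ((RatFunc.X : RatFunc ℚ) -
                  ((if (i : ℕ) < p then q else 0 : ℕ) : RatFunc ℚ) +
                ((i : ℕ) : RatFunc ℚ))) /
        (∏ i : Fin (p * q),
          ((RatFunc.X : RatFunc ℚ) -
                ((if (i : ℕ) < p then q else 0 : ℕ) : RatFunc ℚ) +
              ((i : ℕ) : RatFunc ℚ) + 1)) =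
      ((RatFunc.X : RatFunc ℚ) - (q : RatFunc ℚ)) * ((RatFunc.X : RatFunc ℚ) + (p : RatFunc ℚ)) /
        ((RatFunc.X : RatFunc ℚ) + (p : RatFunc ℚ) - (q : RatFunc ℚ))) ∧
    (∀ ζ : ℝ, 0 ≤ ζ → ∀ i : ℕ, 2 ≤ i →
      shiftedBoolean (p * q) (fun j : Fin (p * q) => if (j : ℕ) < p then q else 0) ζ i =
        -((p : ℝ) * q) * ((q : ℝ) - p - ζ) ^ (i - 2)) := by
  obtain ⟨transform, cumulants⟩ := rectangular_cumulants_general (F := ℚ) p q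
  exact ⟨transform, fun ζ _ => cumulants ζ⟩
end
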